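/- arXiv:1509.04993 — 4 statements merged into one kernel-verified Lean document; each statement's English description precedes it below -/
import Mathlib

section
/- Let R be a commutative ring, f ∈ R, and l ≥ 1 an integer, and let A = R[t]/(t^l - f), so that A is a free R-module with basis 1, t, ..., t^{l-1}. Let k ≥ 1 be an integer and write k = q*l + r with integers q ≥ 0 and 0 ≤ r < l. Then an element Σ_{i=0}^{l-1} a_i t^i of A (with a_i ∈ R) lies in the ideal of A generated by t^k if and only if a_i ∈ (f^{q+1}) for every 0 ≤ i ≤ r - 1 and a_i ∈ (f^q) for every r ≤ i ≤ l - 1. -/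
open Polynomial

/-!
With `k = q * l + r`, multiplication by `t ^ k` shifts the basis `1, t, …, t ^ (l - 1)` cyclically
by `r`, up to powers of `f`: the power is `f ^ q`, with one more `f` exactly when the shift wraps
past `l`, that is, when the new index is below `r`. The ideal `(t ^ k)` is the range of this map, so
membership in it is tested coordinate by coordinate.
-/

theorem mem_range_iff_forall_dvd_repr {R M N ι : Type*} [CommSemiring R] [AddCommMonoid M]
    [Module R M] [AddCommMonoid N] [Module R N] (b : Module.Basis ι R M) (b' : Module.Basis ι R N)
    {φ : M →ₗ[R] N} {c : ι → R} (hφ : ∀ i, φ (b i) = c i • b' i) {x : N} :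
    x ∈ LinearMap.range φ ↔ ∀ i, c i ∣ b'.repr x i := by
  constructor
  · rintro ⟨y, rfl⟩ i
    have hcoord : b'.coord i ∘ₗ φ = c i • b.coord i :=
      b.ext fun j => by
        rcases eq_or_ne j i with rfl | hji
        · simp [hφ]
        · simp [hφ, hji]
    exact ⟨b.repr y i, LinearMap.congr_fun hcoord y⟩
  · intro hdvd
    rw [← b'.linearCombination_repr x]
    refine Submodule.sum_mem _ fun i _ => ?_
    obtain ⟨d, hd⟩ := hdvd i
    exact ⟨d • b i, by simp [hφ, hd, smul_smul, mul_comm]⟩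

section PowerBasis

variable {R S : Type*} [CommRing R] [CommRing S] [Algebra R S] (pb : PowerBasis R S) {f : R}

theorem gen_pow_mul_basis (hf : pb.gen ^ pb.dim = algebraMap R S f) (q : ℕ) (r j : Fin pb.dim) :
    pb.gen ^ (q * pb.dim + r) * pb.basis j =
      f ^ (if finCycle r j < r then q + 1 else q) • pb.basis (finCycle r j) := by
  have gen_pow_add (s i : ℕ) : pb.gen ^ (s * pb.dim + i) = f ^ s • pb.gen ^ i := by
    rw [pow_add, pow_mul', hf, ← map_pow, Algebra.smul_def]
  rw [pb.basis_eq_pow, pb.basis_eq_pow, ← pow_add, ← gen_pow_add]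
  congr 1
  simp only [finCycle_apply, Fin.lt_def, Fin.val_add_eq_ite]
  have := j.isLt
  split_ifs <;> lia

theorem mem_span_gen_pow_iff (hf : pb.gen ^ pb.dim = algebraMap R S f) (q : ℕ) (r : Fin pb.dim)
    {x : S} :
    x ∈ Ideal.span {pb.gen ^ (q * pb.dim + r)} ↔
      ∀ i, f ^ (if i < r then q + 1 else q) ∣ pb.basis.repr x i := by
  have hmul (i : Fin pb.dim) :
      LinearMap.mulLeft R (pb.gen ^ (q * pb.dim + r)) (pb.basis.reindex (finCycle r) i) =
        f ^ (if i < r then q + 1 else q) • pb.basis i := by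
    simpa only [Module.Basis.reindex_apply, LinearMap.mulLeft_apply, Equiv.apply_symm_apply] using
      gen_pow_mul_basis pb hf q r ((finCycle r).symm i)
  rw [← mem_range_iff_forall_dvd_repr _ _ hmul, Ideal.mem_span_singleton']
  simp only [LinearMap.mem_range, LinearMap.mulLeft_apply, mul_comm]

theorem sum_smul_gen_pow_mem_span_iff {l : ℕ} (hl : pb.dim = l)
    (hf : pb.gen ^ l = algebraMap R S f) (q : ℕ) (r : Fin l) (a : Fin l → R) :
    ∑ i, a i • pb.gen ^ (i : ℕ) ∈ Ideal.span {pb.gen ^ (q * l + r)} ↔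
      ∀ i, f ^ (if i < r then q + 1 else q) ∣ a i := by
  subst hl
  simp only [mem_span_gen_pow_iff pb hf, ← pb.basis_eq_pow, pb.basis.repr_sum_self]

end PowerBasis

/-- Let `R` be a commutative ring, `f ∈ R`, and `l ≥ 1` an integer, and let
`A = R[t]/(t^l - f)`, so that `A` is a free `R`-module with basis
`1, t, ..., t^(l-1)`. Let `k ≥ 1` be an integer and write `k = q*l + r` with
integers `q ≥ 0` and `0 ≤ r < l`. Then an element `Σ_{i=0}^{l-1} a_i t^i` of `A`
(with `a_i ∈ R`) lies in the ideal of `A` generated by `t^k` if and only if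
`a_i ∈ (f^(q+1))` for every `0 ≤ i ≤ r - 1` and `a_i ∈ (f^q)` for every
`r ≤ i ≤ l - 1`. -/
theorem stmt_6 (R : Type*) [CommRing R] (f : R) (l : ℕ) (hl : 1 ≤ l)
    (k q r : ℕ) (hk : 1 ≤ k) (hkqr : k = q * l + r) (hr : r < l)
    (a : Fin l → R) :
    (∑ i : Fin l, (AdjoinRoot.of (X ^ l - C f)) (a i) *
        (AdjoinRoot.root (X ^ l - C f)) ^ (i : ℕ)) ∈
      Ideal.span {(AdjoinRoot.root (X ^ l - C f)) ^ k} ↔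
    ((∀ i : Fin l, (i : ℕ) < r → a i ∈ Ideal.span {f ^ (q + 1)}) ∧
      (∀ i : Fin l, r ≤ (i : ℕ) → a i ∈ Ideal.span {f ^ q})) := by
  rcases subsingleton_or_nontrivial R with _ | _
  · simp [Subsingleton.elim (a _) 0]
  let pb := AdjoinRoot.powerBasis' (monic_X_pow_sub_C f (Nat.ne_of_gt hl))
  have hdim : pb.dim = l := natDegree_X_pow_sub_C
  have hroot : pb.gen ^ l = algebraMap R _ f := by
    rw [AdjoinRoot.powerBasis'_gen, AdjoinRoot.algebraMap_eq, ← sub_eq_zero,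
      ← AdjoinRoot.eval₂_root, eval₂_sub, eval₂_X_pow, eval₂_C]
  have hmem := sum_smul_gen_pow_mem_span_iff pb hdim hroot q ⟨r, hr⟩ a
  simp only [Algebra.smul_def, AdjoinRoot.algebraMap_eq] at hmem
  rw [hkqr]
  refine hmem.trans ?_
  simp only [Ideal.mem_span_singleton, ← forall_and]
  refine forall_congr' fun i => ?_
  rcases lt_or_ge (i : ℕ) r with hi | hi
  · simp [Fin.lt_def, hi]
  · simp [Fin.lt_def, hi, hi.not_gt]
end

section
/- Let R be a commutative ring, f ∈ R, and l ≥ 1 an integer, and let A = R[t]/(t^l - f). Let k ≥ 1 be an integer and write k = q*l + r with integers q ≥ 0 and 0 ≤ r < l. Then the quotient A/(t^k A) is isomorphic as an R-module to (R/(f^{q+1}))^r × (R/(f^q))^{l-r}. -/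
open Polynomial

/-!
Let `A = R[t] / (t ^ l - f)`. Since the powers of `t` span `A` over `R`, the ideal `(t ^ k)` is
spanned by the `t ^ m` with `k ≤ m`. As `t ^ (i + l * n) = f ^ n • t ^ i`, its part in the line
`R t ^ i`, `i < l`, is generated by `f ^ n • t ^ i` for the least `n` with `k ≤ i + l * n`, that is,
`n = ⌈(k - i) / l⌉` with truncated subtraction. The ideal is therefore diagonal in the basis
`1, t, …, t ^ (l - 1)`, and the quotient is a product of cyclic modules `R / (f ^ n)`.
-/

section DiagonalSubmodule

variable {ι R M : Type*} [CommRing R] [AddCommGroup M] [Module R M]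

theorem mem_span_range_smul_basis_iff [Finite ι] (b : Module.Basis ι R M) (c : ι → R) (x : M) :
    x ∈ Submodule.span R (Set.range fun i => c i • b i) ↔ ∀ i, c i ∣ b.repr x i := by
  have := Fintype.ofFinite ι
  rw [Submodule.mem_span_range_iff_exists_fun]
  have repr_sum (a : ι → R) (i : ι) : b.repr (∑ j, a j • c j • b j) i = c i * a i := by
    simp only [← mul_smul, b.repr_sum_self, mul_comm]
  constructor
  · rintro ⟨a, rfl⟩ i
    exact ⟨a i, repr_sum a i⟩
  · intro hdvd
    choose a ha using hdvd
    exact ⟨a, b.ext_elem fun i => (repr_sum a i).trans (ha i).symm⟩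

theorem map_equivFun_span_range_smul_basis [Finite ι] (b : Module.Basis ι R M) (c : ι → R) :
    (Submodule.span R (Set.range fun i => c i • b i)).map (b.equivFun : M →ₗ[R] ι → R) =
      Submodule.pi Set.univ fun i => Ideal.span {c i} := by
  ext x
  rw [Submodule.mem_map_equiv, mem_span_range_smul_basis_iff]
  simp only [← b.equivFun_apply, LinearEquiv.apply_symm_apply, Submodule.mem_pi, Set.mem_univ,
    forall_const, Ideal.mem_span_singleton]

/-- The quotient of a free module by the submodule spanned by multiples `c i • b i` of its basis
vectors, as a product of cyclic modules. -/
noncomputable def quotientSpanSMulBasisEquiv [Finite ι] (b : Module.Basis ι R M) (c : ι → R) :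
    (M ⧸ Submodule.span R (Set.range fun i => c i • b i)) ≃ₗ[R] Π i, R ⧸ Ideal.span {c i} := by
  classical
  have := Fintype.ofFinite ι
  exact Submodule.Quotient.equiv _ _ b.equivFun (map_equivFun_span_range_smul_basis b c) ≪≫ₗ
    Submodule.quotientPi fun i => Ideal.span {c i}

end DiagonalSubmodule

section PowerIdeal

variable {R A : Type*} [CommSemiring R] [CommSemiring A] [Algebra R A] {f : R} {t : A} {l : ℕ}

theorem pow_add_mul_eq_pow_smul_pow (ht : t ^ l = algebraMap R A f) (i n : ℕ) :
    t ^ (i + l * n) = f ^ n • t ^ i := by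
  rw [pow_add, pow_mul, ht, ← map_pow, mul_comm, Algebra.smul_def]

theorem restrictScalars_span_pow_eq_span_image_Ici (htop : Algebra.adjoin R {t} = ⊤) (k : ℕ) :
    (Ideal.span {t ^ k}).restrictScalars R = Submodule.span R ((t ^ ·) '' Set.Ici k) := by
  apply le_antisymm
  · intro x hx
    obtain ⟨y, rfl⟩ := Ideal.mem_span_singleton.mp hx
    obtain ⟨p, rfl⟩ : ∃ p : R[X], aeval t p = y := by
      change y ∈ (aeval (R := R) t).range
      rw [← Algebra.adjoin_singleton_eq_range_aeval, htop]
      exact Algebra.mem_top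
    rw [aeval_eq_sum_range, Finset.mul_sum]
    refine Submodule.sum_mem _ fun n _ => ?_
    rw [mul_smul_comm, ← pow_add]
    exact Submodule.smul_mem _ _ (Submodule.subset_span ⟨k + n, Nat.le_add_right k n, rfl⟩)
  · rw [Submodule.span_le]
    rintro _ ⟨m, hm, rfl⟩
    exact Ideal.mem_span_singleton.mpr (pow_dvd_pow t hm)

theorem restrictScalars_span_pow_eq_span_range_smul (hl : 0 < l) (ht : t ^ l = algebraMap R A f)
    (htop : Algebra.adjoin R {t} = ⊤) (k : ℕ) :
    (Ideal.span {t ^ k}).restrictScalars R =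
      Submodule.span R (Set.range fun i : Fin l => f ^ ((k - i) ⌈/⌉ l) • t ^ (i : ℕ)) := by
  rw [restrictScalars_span_pow_eq_span_image_Ici htop]
  apply le_antisymm <;> rw [Submodule.span_le]
  · rintro _ ⟨m, hm, rfl⟩
    have hexp : (k - m % l) ⌈/⌉ l ≤ m / l := by
      rw [ceilDiv_le_iff_le_mul hl, tsub_le_iff_left, Nat.mod_add_div]
      exact hm
    have hpow : t ^ m =
        f ^ (m / l - (k - m % l) ⌈/⌉ l) • f ^ ((k - m % l) ⌈/⌉ l) • t ^ (m % l) := by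
      rw [smul_smul, pow_sub_mul_pow f hexp, ← pow_add_mul_eq_pow_smul_pow ht, Nat.mod_add_div]
    simp only [SetLike.mem_coe, hpow]
    exact Submodule.smul_mem _ _ (Submodule.subset_span ⟨⟨m % l, Nat.mod_lt m hl⟩, rfl⟩)
  · rintro _ ⟨i, rfl⟩
    have hle : k ≤ i + l * ((k - i) ⌈/⌉ l) :=
      tsub_le_iff_left.mp ((ceilDiv_le_iff_le_mul hl).mp le_rfl)
    exact Submodule.subset_span ⟨_, hle, pow_add_mul_eq_pow_smul_pow ht i _⟩

end PowerIdeal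

theorem mul_add_sub_ceilDiv_eq_ite {l r i : ℕ} (q : ℕ) (hi : i < l) (hr : r ≤ l) :
    (q * l + r - i) ⌈/⌉ l = if i < r then q + 1 else q := by
  rw [Nat.ceilDiv_eq_add_pred_div]
  split_ifs with h <;> apply Nat.div_eq_of_lt_le <;> grind

/-- The decomposition of a product over `Fin (m + n)` into its first `m` and last `n` factors. -/
def piFinAddEquivProd (R : Type*) [Semiring R] {m n : ℕ} (M : Fin (m + n) → Type*)
    [∀ i, AddCommMonoid (M i)] [∀ i, Module R (M i)] :
    (Π i, M i) ≃ₗ[R] (Π i, M (Fin.castAdd n i)) × (Π i, M (Fin.natAdd m i)) where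
  toFun x := (fun i => x (Fin.castAdd n i), fun i => x (Fin.natAdd m i))
  invFun y := Fin.addCases y.1 y.2
  map_add' _ _ := rfl
  map_smul' _ _ := rfl
  left_inv x := by
    ext i
    cases i using Fin.addCases <;> simp only [Fin.addCases_left, Fin.addCases_right]
  right_inv y := by simp only [Fin.addCases_left, Fin.addCases_right]

section CyclicCover

variable {R : Type*} [CommRing R] (f : R) {l : ℕ}

theorem root_X_pow_sub_C_pow_eq_algebraMap :
    AdjoinRoot.root (X ^ l - C f) ^ l = algebraMap R (AdjoinRoot (X ^ l - C f)) f := by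
  rw [AdjoinRoot.algebraMap_eq, ← sub_eq_zero, ← AdjoinRoot.eval₂_root, eval₂_sub, eval₂_C,
    eval₂_X_pow]

theorem exists_basis_adjoinRoot_X_pow_sub_C (hl : l ≠ 0) :
    ∃ b : Module.Basis (Fin l) R (AdjoinRoot (X ^ l - C f)),
      ∀ i, b i = AdjoinRoot.root (X ^ l - C f) ^ (i : ℕ) := by
  cases subsingleton_or_nontrivial R
  · have := Module.subsingleton R (AdjoinRoot (X ^ l - C f))
    exact ⟨.ofRepr 0, fun i => Subsingleton.elim _ _⟩
  · let pb := AdjoinRoot.powerBasis' (monic_X_pow_sub_C f hl)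
    have hdim : pb.dim = l := natDegree_X_pow_sub_C
    refine ⟨pb.basis.reindex (finCongr hdim), fun i => ?_⟩
    rw [Module.Basis.reindex_apply, pb.basis_eq_pow]
    rfl

theorem nonempty_adjoinRoot_quotient_span_root_pow_equiv_pi (hl : 0 < l) (k : ℕ) :
    Nonempty
      ((AdjoinRoot (X ^ l - C f) ⧸ Ideal.span {AdjoinRoot.root (X ^ l - C f) ^ k}) ≃ₗ[R]
        Π i : Fin l, R ⧸ Ideal.span {f ^ ((k - i) ⌈/⌉ l)}) := by
  obtain ⟨b, hb⟩ := exists_basis_adjoinRoot_X_pow_sub_C f hl.ne'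
  have hdiag := restrictScalars_span_pow_eq_span_range_smul hl
    (root_X_pow_sub_C_pow_eq_algebraMap f) AdjoinRoot.adjoinRoot_eq_top k
  simp only [← hb] at hdiag
  exact ⟨(Submodule.Quotient.restrictScalarsEquiv R _).symm ≪≫ₗ
    Submodule.quotEquivOfEq _ _ hdiag ≪≫ₗ quotientSpanSMulBasisEquiv b _⟩

end CyclicCover

/-- Let `R` be a commutative ring, `f ∈ R`, and `l ≥ 1` an integer, and let
`A = R[t]/(t^l - f)`. Let `k ≥ 1` be an integer and write `k = q*l + r` with
integers `q ≥ 0` and `0 ≤ r < l`. Then the quotient `A/(t^k A)` is isomorphic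
as an `R`-module to `(R/(f^(q+1)))^r × (R/(f^q))^(l-r)`. -/
theorem stmt_7 (R : Type*) [CommRing R] (f : R) (l : ℕ) (hl : 1 ≤ l)
    (k q r : ℕ) (hk : 1 ≤ k) (hkqr : k = q * l + r) (hr : r < l) :
    Nonempty
      ((AdjoinRoot (X ^ l - C f) ⧸
          Ideal.span {(AdjoinRoot.root (X ^ l - C f)) ^ k}) ≃ₗ[R]
        (Fin r → R ⧸ Ideal.span {f ^ (q + 1)}) ×
          (Fin (l - r) → R ⧸ Ideal.span {f ^ q})) := by
  obtain ⟨e⟩ := nonempty_adjoinRoot_quotient_span_root_pow_equiv_pi f hl k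
  have hexp (i : Fin l) : (k - i) ⌈/⌉ l = if (i : ℕ) < r then q + 1 else q :=
    hkqr ▸ mul_add_sub_ceilDiv_eq_ite q i.isLt hr.le
  obtain ⟨s, rfl⟩ := Nat.exists_eq_add_of_le hr.le
  rw [Nat.add_sub_cancel_left]
  have hfst (i : Fin r) : (k - Fin.castAdd s i) ⌈/⌉ (r + s) = q + 1 := by
    rw [hexp, if_pos (by simp)]
  have hsnd (i : Fin s) : (k - Fin.natAdd r i) ⌈/⌉ (r + s) = q := by
    rw [hexp, if_neg (by simp)]
  exact ⟨e ≪≫ₗ piFinAddEquivProd R _ ≪≫ₗ LinearEquiv.prodCongr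
    (LinearEquiv.piCongrRight fun i => Submodule.quotEquivOfEq _ _ (by rw [hfst]))
    (LinearEquiv.piCongrRight fun i => Submodule.quotEquivOfEq _ _ (by rw [hsnd]))⟩
end

section
/- Let p ≥ 3, k ≥ 1, n ≥ k + 1, χ ≥ 1, s ≥ 1 be integers and let t be an integer with t ≤ (p^k - 1)*s. Then, as rational numbers, p^n*χ + (1/12)*p^n*(p^n - 1)*((2*p^n - 1)*s - 3*t) ≥ 2. -/
/-!
Write `q = p ^ n`. The correction term added to `q * χ` has the sign of `(2 * q - 1) * s - 3 * t`.
Since `p ^ k ≤ q / p` and `3 / p ≤ 2`, the bound `t ≤ (p ^ k - 1) * s` gives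
`3 * t ≤ (2 * q - 3) * s`, so the correction is nonnegative and the sum is at least `q * χ ≥ 2`.
-/

section PowerBound

variable {R : Type*} [CommRing R] [LinearOrder R] [IsStrictOrderedRing R]

theorem three_mul_pow_le_two_mul_pow {p : R} {k n : ℕ} (hp : 3 ≤ 2 * p) (hkn : k < n) :
    3 * p ^ k ≤ 2 * p ^ n := by
  have hp_one : 1 ≤ p := by linarith
  calc
    3 * p ^ k ≤ 2 * p * p ^ k := by gcongr
    _ = 2 * p ^ (k + 1) := by ring
    _ ≤ 2 * p ^ n := by gcongr; exact hkn

theorem three_mul_le_two_mul_pow_sub_one_mul {p s t : R} {k n : ℕ} (hp : 3 ≤ 2 * p)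
    (hkn : k < n) (hs : 0 ≤ s) (ht : t ≤ (p ^ k - 1) * s) :
    3 * t ≤ (2 * p ^ n - 1) * s := by
  have hpow : 3 * (p ^ k - 1) ≤ 2 * p ^ n - 1 := by
    linarith [three_mul_pow_le_two_mul_pow hp hkn]
  calc
    3 * t ≤ 3 * ((p ^ k - 1) * s) := by gcongr
    _ = 3 * (p ^ k - 1) * s := by ring
    _ ≤ (2 * p ^ n - 1) * s := by gcongr

end PowerBound

section EulerCharacteristic

variable {K : Type*} [Field K] [LinearOrder K] [IsStrictOrderedRing K]

theorem eulerChar_correction_nonneg {q s t : K} (hq : 1 ≤ q) (ht : 3 * t ≤ (2 * q - 1) * s) :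
    0 ≤ (1 / 12) * q * (q - 1) * ((2 * q - 1) * s - 3 * t) := by
  have hcoeff : 0 ≤ (1 / 12) * q * (q - 1) :=
    mul_nonneg (by positivity) (sub_nonneg.2 hq)
  exact mul_nonneg hcoeff (sub_nonneg.2 ht)

theorem stmt_9_general {p χ s t : K} {k n : ℕ} (hp : 2 ≤ p) (hkn : k < n) (hχ : 1 ≤ χ)
    (hs : 0 ≤ s) (ht : t ≤ (p ^ k - 1) * s) :
    2 ≤ p ^ n * χ + (1 / 12) * p ^ n * (p ^ n - 1) * ((2 * p ^ n - 1) * s - 3 * t) := by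
  have hp_one : 1 ≤ p := one_le_two.trans hp
  have hpow : 2 ≤ p ^ n := hp.trans (le_self_pow₀ hp_one (Nat.ne_zero_of_lt hkn))
  have hbracket : 3 * t ≤ (2 * p ^ n - 1) * s :=
    three_mul_le_two_mul_pow_sub_one_mul (by linarith) hkn hs ht
  calc
    2 ≤ p ^ n := hpow
    _ ≤ p ^ n * χ := le_mul_of_one_le_right (by positivity) hχ
    _ ≤ _ := le_add_of_nonneg_right
      (eulerChar_correction_nonneg (one_le_pow₀ hp_one) hbracket)

end EulerCharacteristic

/-- Let `p ≥ 3`, `k ≥ 1`, `n ≥ k + 1`, `χ ≥ 1`, `s ≥ 1` be integers and let `t`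
be an integer with `t ≤ (p^k - 1)*s`. Then, as rational numbers,
`p^n*χ + (1/12)*p^n*(p^n - 1)*((2*p^n - 1)*s - 3*t) ≥ 2`. -/
theorem stmt_9 (p χ s t : ℤ) (k n : ℕ) (hp : 3 ≤ p) (hk : 1 ≤ k)
    (hn : k + 1 ≤ n) (hχ : 1 ≤ χ) (hs : 1 ≤ s) (ht : t ≤ (p ^ k - 1) * s) :
    (2 : ℚ) ≤ (p : ℚ) ^ n * χ +
      (1 / 12) * (p : ℚ) ^ n * ((p : ℚ) ^ n - 1) *
        ((2 * (p : ℚ) ^ n - 1) * s - 3 * t) :=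
  stmt_9_general (mod_cast (by lia : 2 ≤ p)) hn (mod_cast hχ)
    (mod_cast zero_le_one.trans hs) (mod_cast ht)
end

section
/- Let R be a commutative ring, f ∈ R, and l ≥ 1 an integer, and let A = R[t]/(t^l - f). Let k ≥ 1 be an integer, write k = q*l + r with q ≥ 0 and 0 ≤ r < l, and suppose r ≥ 1. Then the kernel of the natural ring homomorphism R → A/(t^k A) is the ideal (f^{q+1}); if instead r = 0, the kernel is (f^q). -/
open Polynomial

/-!
In the basis `1, t, …, t^(l-1)` of `A`, the coordinate of `t^n` at `1` is `f^(n/l)` if `l ∣ n`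
and `0` otherwise. Hence this coordinate of any multiple of `t^k` is divisible by
`f^⌈k/l⌉`, while it recovers `x` from the image of `x ∈ R` in `A`. Conversely
`f^⌈k/l⌉ = t^(l⌈k/l⌉)` is a multiple of `t^k`.
-/

theorem mul_add_ceilDiv_eq_add_one {q l r : ℕ} (hr : 0 < r) (hrl : r ≤ l) :
    (q * l + r) ⌈/⌉ l = q + 1 := by
  rw [Nat.ceilDiv_eq_add_pred_div]
  apply Nat.div_eq_of_lt_le <;> lia

theorem ker_algebraMap_quotient {R A : Type*} [CommSemiring R] [CommRing A] [Algebra R A]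
    (I : Ideal A) : RingHom.ker (algebraMap R (A ⧸ I)) = I.comap (algebraMap R A) := by
  rw [IsScalarTower.algebraMap_eq R A, ← RingHom.comap_ker, Ideal.Quotient.algebraMap_eq,
    Ideal.mk_ker]

section RootOfAlgebraMap

variable {R A : Type*} [CommRing R] [CommRing A] [Algebra R A] {f : R} {t : A} {l : ℕ}

theorem pow_eq_smul_pow_mod (ht : t ^ l = algebraMap R A f) (n : ℕ) :
    t ^ n = f ^ (n / l) • t ^ (n % l) := by
  rw [Algebra.smul_def, map_pow, ← ht, ← pow_mul, ← pow_add, Nat.div_add_mod]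

theorem pow_dvd_algebraMap_pow_ceilDiv (hl : 0 < l) (ht : t ^ l = algebraMap R A f) (k : ℕ) :
    t ^ k ∣ algebraMap R A (f ^ (k ⌈/⌉ l)) := by
  rw [map_pow, ← ht, ← pow_mul]
  exact pow_dvd_pow t (le_smul_ceilDiv hl)

end RootOfAlgebraMap

section PowerBasis

variable {R A : Type*} [CommRing R] [CommRing A] [Algebra R A] {f : R}
  (pb : PowerBasis R A) [NeZero pb.dim]

theorem coord_zero_gen_pow (hf : pb.gen ^ pb.dim = algebraMap R A f) (n : ℕ) :
    pb.basis.coord 0 (pb.gen ^ n) = if pb.dim ∣ n then f ^ (n / pb.dim) else 0 := by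
  have gen_pow_mod : pb.gen ^ (n % pb.dim) = pb.basis (Fin.ofNat pb.dim n) := by
    rw [pb.basis_eq_pow, Fin.val_ofNat]
  rw [pow_eq_smul_pow_mod hf, gen_pow_mod, map_smul, Module.Basis.coord_apply,
    Module.Basis.repr_self_apply, smul_eq_mul, mul_ite, mul_one, mul_zero]
  simp only [Fin.ext_iff, Fin.val_ofNat, Fin.val_zero, Nat.dvd_iff_mod_eq_zero]

theorem coord_zero_algebraMap (x : R) : pb.basis.coord 0 (algebraMap R A x) = x := by
  have basis_zero : pb.basis 0 = 1 := by rw [pb.basis_eq_pow, Fin.val_zero, pow_zero]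
  rw [Algebra.algebraMap_eq_smul_one, map_smul, ← basis_zero, Module.Basis.coord_apply,
    Module.Basis.repr_self_apply, if_pos rfl, smul_eq_mul, mul_one]

theorem pow_ceilDiv_dvd_coord_zero (hf : pb.gen ^ pb.dim = algebraMap R A f) {k : ℕ} {a : A}
    (ha : pb.gen ^ k ∣ a) : f ^ (k ⌈/⌉ pb.dim) ∣ pb.basis.coord 0 a := by
  obtain ⟨b, rfl⟩ := ha
  rw [← pb.basis.sum_repr b, Finset.mul_sum, map_sum]
  refine Finset.dvd_sum fun i _ ↦ ?_
  rw [mul_smul_comm, pb.basis_eq_pow, ← pow_add, map_smul, coord_zero_gen_pow pb hf]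
  refine Dvd.dvd.mul_left ?_ _
  split_ifs with hdvd
  · refine pow_dvd_pow f ((ceilDiv_le_iff_le_mul (NeZero.pos pb.dim)).2 ?_)
    rw [Nat.mul_div_cancel' hdvd]
    exact Nat.le_add_right k i
  · exact dvd_zero _

theorem comap_algebraMap_span_gen_pow (hf : pb.gen ^ pb.dim = algebraMap R A f) (k : ℕ) :
    (Ideal.span {pb.gen ^ k}).comap (algebraMap R A) = Ideal.span {f ^ (k ⌈/⌉ pb.dim)} := by
  ext x
  rw [Ideal.mem_comap, Ideal.mem_span_singleton, Ideal.mem_span_singleton]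
  constructor
  · intro hx
    simpa only [coord_zero_algebraMap] using pow_ceilDiv_dvd_coord_zero pb hf hx
  · intro hx
    exact (pow_dvd_algebraMap_pow_ceilDiv (NeZero.pos pb.dim) hf k).trans
      (map_dvd (algebraMap R A) hx)

end PowerBasis

section AdjoinRoot

variable {R : Type*} [CommRing R]

theorem adjoinRoot_root_pow_eq_algebraMap (f : R) (l : ℕ) :
    AdjoinRoot.root (X ^ l - C f) ^ l = algebraMap R (AdjoinRoot (X ^ l - C f)) f := by
  have h := AdjoinRoot.eval₂_root (X ^ l - C f)
  rwa [eval₂_sub, eval₂_X_pow, eval₂_C, sub_eq_zero] at h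

theorem ker_algebraMap_adjoinRoot_quotient_root_pow (f : R) {l : ℕ} (hl : 0 < l) (k : ℕ) :
    RingHom.ker (algebraMap R (AdjoinRoot (X ^ l - C f) ⧸
        Ideal.span {AdjoinRoot.root (X ^ l - C f) ^ k})) = Ideal.span {f ^ (k ⌈/⌉ l)} := by
  nontriviality R
  let pb := AdjoinRoot.powerBasis' (monic_X_pow_sub_C f hl.ne')
  have hdim : pb.dim = l := natDegree_X_pow_sub_C
  have : NeZero pb.dim := ⟨hdim.trans_ne hl.ne'⟩
  have hgen : pb.gen ^ pb.dim = algebraMap R _ f := by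
    rw [hdim]
    exact adjoinRoot_root_pow_eq_algebraMap f l
  rw [ker_algebraMap_quotient]
  exact (comap_algebraMap_span_gen_pow pb hgen k).trans (by rw [hdim])

end AdjoinRoot

/-- Let `R` be a commutative ring, `f ∈ R`, and `l ≥ 1` an integer, and let
`A = R[t]/(t^l - f)`. Let `k ≥ 1` be an integer, write `k = q*l + r` with
`q ≥ 0` and `0 ≤ r < l`. Then the kernel of the natural ring homomorphism
`R → A/(t^k A)` is the ideal `(f^(q+1))` if `r ≥ 1`; if instead `r = 0`,
the kernel is `(f^q)`. -/
theorem stmt_14 (R : Type*) [CommRing R] (f : R) (l : ℕ) (hl : 1 ≤ l)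
    (k q r : ℕ) (hk : 1 ≤ k) (hkqr : k = q * l + r) (hr : r < l) :
    (1 ≤ r →
      RingHom.ker (algebraMap R (AdjoinRoot (X ^ l - C f) ⧸
          Ideal.span {(AdjoinRoot.root (X ^ l - C f)) ^ k})) =
        Ideal.span {f ^ (q + 1)}) ∧
    (r = 0 →
      RingHom.ker (algebraMap R (AdjoinRoot (X ^ l - C f) ⧸
          Ideal.span {(AdjoinRoot.root (X ^ l - C f)) ^ k})) =
        Ideal.span {f ^ q}) := by
  rw [ker_algebraMap_adjoinRoot_quotient_root_pow f hl k, hkqr]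
  constructor
  · intro hr_pos
    rw [mul_add_ceilDiv_eq_add_one hr_pos hr.le]
  · rintro rfl
    rw [add_zero, mul_comm, ← smul_eq_mul, smul_ceilDiv (Nat.lt_of_succ_le hl)]
end
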